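/- There exists a continuous, strictly increasing function m : (λ₀, ∞) → (0, ∞), real-analytic on (λ₀,∞), such that for every λ > λ₀ and every μ ≥ 0 one has Ξ(λ, μ) = 0 if and only if μ = m(λ). -/

import Mathlib

open Set

/-! For a solution of `(ρ z')' = q z` with `z(a) = 0`, the number `D = ρ(b) z'(b) / z(b)` is the
minimum of `∫ₐᵇ (ρ w'² + q w²)` over `w` with `w(a) = 0`, `w(b) = 1`. Hence, for `q = μ β`, it is
concave in `μ` as an infimum of affine functions, strictly increasing in the coefficients, and
`o(μ)` as `μ → ∞`, since competitors concentrated near `b` make `∫ β w²` arbitrarily small. Moreover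
`D` is analytic in the coefficients: `z` is obtained by inverting `1 - V`, where `V` is a product of
two Volterra operators and hence quasinilpotent, and inversion in a Banach algebra is analytic.

The equation `Ξ(λ, μ) = 0` reads `H(λ, μ) := D(λ, μ) - (g + σ μ) = 0`. For each `λ > λ₀`, `H(λ, ·)`
is concave, positive at `0` (since `H(λ₀, 0) = 0`) and eventually nonpositive, so it has exactly one
zero `m(λ)`, at which its derivative is negative: the implicit function theorem makes `m` analytic,
and monotonicity of `H` in `λ` makes `m` strictly increasing. -/

open MeasureTheory Filter Asymptotics
open scoped Topology ContDiff

section ScalarImplicitFunction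

theorem exists_contDiffAt_implicit_real {E : Type*} [NormedAddCommGroup E] [NormedSpace ℝ E]
    [CompleteSpace E] {n : ℕ∞ω} (hn : n ≠ 0) {F : E × ℝ → ℝ} {l : E} {m D : ℝ}
    (hF : ContDiffAt ℝ n F (l, m)) (hD : HasDerivAt (fun μ => F (l, μ)) D m) (hD0 : D ≠ 0) :
    ∃ φ : E → ℝ, ContDiffAt ℝ n φ l ∧ φ l = m ∧ ∀ᶠ x in 𝓝 l, F (x, φ x) = F (l, m) := by
  have hinv : (fderiv ℝ F (l, m) ∘L .inr ℝ E ℝ).IsInvertible := by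
    have hD1 : (fderiv ℝ F (l, m) ∘L .inr ℝ E ℝ) 1 = D :=
      HasDerivAt.unique
        ((hF.differentiableAt hn).hasFDerivAt.comp m (hasFDerivAt_prodMk_right l m)).hasDerivAt hD
    refine ⟨ContinuousLinearEquiv.unitsEquivAut ℝ (Units.mk0 D hD0), ?_⟩
    ext
    simpa using hD1.symm
  exact ⟨hF.implicitFunction hn hinv, hF.contDiffAt_implicitFunction hn hinv,
    hF.implicitFunction_apply_self hn hinv, hF.eventually_apply_implicitFunction hn hinv⟩

theorem le_of_concaveOn_of_eq_zero {f : ℝ → ℝ} (hf : ConcaveOn ℝ (Ici 0) f) (h0 : 0 < f 0) {m μ : ℝ}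
    (hm : 0 ≤ m) (hfm : f m = 0) (hμ : 0 ≤ μ) (hfμ : 0 ≤ f μ) : μ ≤ m := by
  by_contra! hmμ
  have hm0 : 0 < m := hm.lt_of_ne (by rintro rfl; exact h0.ne' hfm)
  have hseg : m ∈ openSegment ℝ 0 μ := by
    rw [openSegment_eq_Ioo (hm0.trans hmμ)]
    exact ⟨hm0, hmμ⟩
  have := hf.lt_right_of_left_lt self_mem_Ici hμ hseg (hfm ▸ h0)
  linarith

theorem deriv_neg_of_concaveOn_of_eq_zero {f : ℝ → ℝ} (hf : ConcaveOn ℝ (Ici 0) f) (h0 : 0 < f 0)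
    {m D : ℝ} (hm : 0 < m) (hfm : f m = 0) (hD : HasDerivAt f D m) : D < 0 := by
  refine (hf.le_slope_of_hasDerivAt self_mem_Ici hm.le hm hD).trans_lt ?_
  rw [slope_def_field, hfm]
  exact div_neg_of_neg_of_pos (by linarith) (by linarith)

theorem exists_pos_forall_eq_zero_iff_of_concaveOn {f : ℝ → ℝ} (hf : ConcaveOn ℝ (Ici 0) f)
    (hc : ContinuousOn f (Ici 0)) (h0 : 0 < f 0) (hneg : ∃ μ, 0 ≤ μ ∧ f μ ≤ 0) :
    ∃ m, 0 < m ∧ ∀ μ, 0 ≤ μ → (f μ = 0 ↔ μ = m) := by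
  obtain ⟨M, hM, hfM⟩ := hneg
  obtain ⟨m, hm, hfm⟩ := intermediate_value_Icc' hM (hc.mono Icc_subset_Ici_self) ⟨hfM, h0.le⟩
  refine ⟨m, hm.1.lt_of_ne (by rintro rfl; exact h0.ne' hfm), fun μ hμ =>
    ⟨fun hfμ => ?_, fun h => h ▸ hfm⟩⟩
  exact le_antisymm (le_of_concaveOn_of_eq_zero hf h0 hm.1 hfm hμ hfμ.ge)
    (le_of_concaveOn_of_eq_zero hf h0 hμ hfμ hm.1 hfm.ge)

theorem exists_strictMonoOn_contDiffAt_zero_of_concaveOn {s : Set ℝ} (hs : IsOpen s) {n : ℕ∞ω}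
    (hn : n ≠ 0) {H : ℝ → ℝ → ℝ}
    (hH : ∀ l ∈ s, ∀ μ, 0 ≤ μ → ContDiffAt ℝ n (fun q : ℝ × ℝ => H q.1 q.2) (l, μ))
    (hconc : ∀ l ∈ s, ConcaveOn ℝ (Ici 0) (H l))
    (hmono : ∀ μ, 0 ≤ μ → StrictMonoOn (fun l => H l μ) s)
    (hpos : ∀ l ∈ s, 0 < H l 0) (hneg : ∀ l ∈ s, ∃ μ, 0 ≤ μ ∧ H l μ ≤ 0) :
    ∃ m : ℝ → ℝ, (∀ l ∈ s, ContDiffAt ℝ n m l) ∧ StrictMonoOn m s ∧ (∀ l ∈ s, 0 < m l) ∧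
      ∀ l ∈ s, ∀ μ, 0 ≤ μ → (H l μ = 0 ↔ μ = m l) := by
  have hslice : ∀ l ∈ s, ∀ μ, 0 ≤ μ → DifferentiableAt ℝ (H l) μ := fun l hl μ hμ =>
    ((hH l hl μ hμ).comp μ (f := fun μ => (l, μ)) (by fun_prop)).differentiableAt hn
  have hzero : ∀ l ∈ s, ∃ m, 0 < m ∧ ∀ μ, 0 ≤ μ → (H l μ = 0 ↔ μ = m) := fun l hl =>
    exists_pos_forall_eq_zero_iff_of_concaveOn (hconc l hl)
      (fun μ hμ => (hslice l hl μ hμ).continuousAt.continuousWithinAt) (hpos l hl) (hneg l hl)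
  choose! m hm hHm using hzero
  have hroot : ∀ l ∈ s, H l (m l) = 0 := fun l hl => (hHm l hl _ (hm l hl).le).2 rfl
  refine ⟨m, fun l hl => ?_, fun l₁ h₁ l₂ h₂ h₁₂ => ?_, hm, hHm⟩
  · have hD := (hslice l hl _ (hm l hl).le).hasDerivAt
    obtain ⟨φ, hφ, hφl, hφ0⟩ := exists_contDiffAt_implicit_real hn (hH l hl _ (hm l hl).le) hD
      (deriv_neg_of_concaveOn_of_eq_zero (hconc l hl) (hpos l hl) (hm l hl) (hroot l hl) hD).ne
    have hφpos : ∀ᶠ x in 𝓝 l, 0 < φ x :=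
      hφ.continuousAt.eventually (lt_mem_nhds (hφl ▸ hm l hl))
    refine hφ.congr_of_eventuallyEq ?_
    filter_upwards [hφ0, hφpos, hs.mem_nhds hl] with x hx0 hxpos hxs
    exact ((hHm x hxs _ hxpos.le).1 (hx0.trans (hroot l hl))).symm
  · have hlt : 0 < H l₂ (m l₁) := hroot l₁ h₁ ▸ hmono _ (hm l₁ h₁).le h₁ h₂ h₁₂
    refine (le_of_concaveOn_of_eq_zero (hconc l₂ h₂) (hpos l₂ h₂) (hm l₂ h₂).le (hroot l₂ h₂)
      (hm l₁ h₁).le hlt.le).lt_of_ne fun heq => ?_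
    rw [heq, hroot l₂ h₂] at hlt
    exact hlt.false

end ScalarImplicitFunction

section BanachAlgebra

theorem isUnit_one_sub_of_isUnit_one_sub_pow {R : Type*} [Ring R] {x : R} {n : ℕ}
    (h : IsUnit (1 - x ^ n)) : IsUnit (1 - x) := by
  have hcomm : Commute (1 - x) (∑ i ∈ Finset.range n, x ^ i) := by
    rw [Commute, SemiconjBy, mul_neg_geom_sum, geom_sum_mul_neg]
  rw [← mul_neg_geom_sum] at h
  exact (hcomm.isUnit_mul_iff.1 h).1

theorem contDiffAt_ringInverse_of_isUnit {𝕜 R : Type*} [NontriviallyNormedField 𝕜] [NormedRing R]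
    [NormedAlgebra 𝕜 R] [HasSummableGeomSeries R] {n : ℕ∞ω} {x : R} (hx : IsUnit x) :
    ContDiffAt 𝕜 n Ring.inverse x :=
  hx.unit_spec ▸ contDiffAt_ringInverse 𝕜 hx.unit

/-- Post-composition with `√`: the Nemytskii operator of the square root on `C(X, ℝ)`. -/
noncomputable def sqrtComp {X : Type*} [TopologicalSpace X] (f : C(X, ℝ)) : C(X, ℝ) :=
  ContinuousMap.comp ⟨Real.sqrt, Real.continuous_sqrt⟩ f

theorem sqrtComp_sq {X : Type*} [TopologicalSpace X] {f : C(X, ℝ)} (hf : ∀ x, 0 ≤ f x) :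
    sqrtComp (f ^ 2) = f := by
  ext x
  exact Real.sqrt_sq (hf x)

theorem contDiffAt_sqrtComp {X : Type*} [TopologicalSpace X] [CompactSpace X] {n : ℕ∞ω}
    {f : C(X, ℝ)} (hf : ∀ x, 0 < f x) : ContDiffAt ℝ n sqrtComp f := by
  set u := sqrtComp f
  have hu : ∀ x, 0 < u x := fun x => Real.sqrt_pos.2 (hf x)
  have huf : u ^ 2 = f := by
    ext x
    exact Real.sq_sqrt (hf x).le
  have hunit : IsUnit (2 * u) :=
    (ContinuousMap.isUnit_iff_forall_ne_zero _).2 fun x => mul_ne_zero two_ne_zero (hu x).ne'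
  let e : C(X, ℝ) ≃L[ℝ] C(X, ℝ) := ContinuousLinearEquiv.smulLeft hunit.unit
  have hsq : ContDiffAt ℝ ω (fun h : C(X, ℝ) => h ^ 2) u := contDiffAt_id.pow 2
  have hderiv : HasFDerivAt (fun h : C(X, ℝ) => h ^ 2) (e : C(X, ℝ) →L[ℝ] C(X, ℝ)) u := by
    refine ((hasFDerivAt_id u).pow 2).congr_fderiv ?_
    ext1 h
    simp [e, Units.smul_def, ContinuousLinearEquiv.smulLeft]
  have hleft : ∀ᶠ h in 𝓝 u, sqrtComp (h ^ 2) = h := by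
    filter_upwards [ContinuousMap.eventually_mapsTo isCompact_univ isOpen_Ioi
      fun x _ => hu x] with h hh
    exact sqrtComp_sq fun x => (hh (mem_univ x)).le
  have hinv := hsq.to_localInverse hderiv (by simp)
  have heq := (hsq.hasStrictFDerivAt' hderiv (by simp)).localInverse_unique hleft
  rw [huf] at hinv heq
  exact (hinv.congr_of_eventuallyEq heq).of_le le_top

end BanachAlgebra

section Primitive

variable {a b : ℝ} {E : Type*} [NormedAddCommGroup E] [NormedSpace ℝ E]

/-- The operator of integration from the left endpoint on continuous functions on `[a, b]`. -/
noncomputable def primitive (hab : a ≤ b) : C(Icc a b, E) →L[ℝ] C(Icc a b, E) :=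
  LinearMap.mkContinuous
    { toFun f := ⟨fun x => ∫ t in a..x, IccExtend hab f t,
        (intervalIntegral.continuous_primitive
          (fun _ _ => f.continuous.Icc_extend'.intervalIntegrable _ _) a).comp
          continuous_subtype_val⟩
      map_add' f g := by
        ext x
        exact intervalIntegral.integral_add (f.continuous.Icc_extend'.intervalIntegrable _ _)
          (g.continuous.Icc_extend'.intervalIntegrable _ _)
      map_smul' c f := by
        ext x
        exact intervalIntegral.integral_smul c _ }
    (b - a) fun f => by
      rw [ContinuousMap.norm_le _ (mul_nonneg (sub_nonneg.2 hab) (norm_nonneg _))]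
      intro x
      calc ‖∫ t in a..x, IccExtend hab f t‖ ≤ ‖f‖ * |x - a| :=
            intervalIntegral.norm_integral_le_of_norm_le_const fun t _ => f.norm_coe_le_norm _
        _ ≤ (b - a) * ‖f‖ := by
            rw [abs_of_nonneg (sub_nonneg.2 x.2.1), mul_comm]
            gcongr
            exact x.2.2

theorem primitive_apply (hab : a ≤ b) (f : C(Icc a b, E)) (x : Icc a b) :
    primitive hab f x = ∫ t in a..x, IccExtend hab f t := rfl

theorem primitive_eq_sub_of_hasDerivAt [CompleteSpace E] (hab : a ≤ b) {f : C(Icc a b, E)}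
    {F : ℝ → E} (hF : ContinuousOn F (Icc a b))
    (hF' : ∀ t (ht : t ∈ Ioo a b), HasDerivAt F (f ⟨t, Ioo_subset_Icc_self ht⟩) t) (x : Icc a b) :
    primitive hab f x = F x - F a := by
  refine intervalIntegral.integral_eq_sub_of_hasDerivAt_of_le x.2.1
    (hF.mono (Icc_subset_Icc_right x.2.2)) (fun t ht => ?_)
    (f.continuous.Icc_extend'.intervalIntegrable _ _)
  have ht' : t ∈ Ioo a b := ⟨ht.1, ht.2.trans_le x.2.2⟩
  rw [IccExtend_of_mem hab f (Ioo_subset_Icc_self ht')]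
  exact hF' t ht'

theorem norm_primitive_apply_le (hab : a ≤ b) {f : C(Icc a b, E)} {A : ℝ} {n : ℕ}
    (hf : ∀ x, ‖f x‖ ≤ A * ((x - a) ^ n / n.factorial)) (x : Icc a b) :
    ‖primitive hab f x‖ ≤ A * ((x - a) ^ (n + 1) / (n + 1).factorial) :=
  calc ‖primitive hab f x‖ ≤ ∫ t in a..(x : ℝ), A * ((t - a) ^ n / n.factorial) := by
        refine intervalIntegral.norm_integral_le_of_norm_le x.2.1 (.of_forall fun t ht => ?_)
          (Continuous.intervalIntegrable (by fun_prop) _ _)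
        have ht' : t ∈ Icc a b := ⟨ht.1.le, ht.2.trans x.2.2⟩
        rw [IccExtend_of_mem hab f ht']
        exact hf ⟨t, ht'⟩
    _ = A * ((x - a) ^ (n + 1) / (n + 1).factorial) := by
        rw [intervalIntegral.integral_const_mul, intervalIntegral.integral_div,
          intervalIntegral.integral_comp_sub_right (· ^ n), integral_pow, Nat.factorial_succ]
        push_cast
        field_simp
        ring

end Primitive

section Volterra

variable {a b : ℝ} {𝔸 : Type*} [NormedRing 𝔸] [NormedAlgebra ℝ 𝔸]

/-- The Volterra operator `f ↦ ∫ₐ r f` on continuous functions on `[a, b]`, as a continuous linear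
function of the weight `r`. -/
noncomputable def volterra (hab : a ≤ b) :
    C(Icc a b, 𝔸) →L[ℝ] C(Icc a b, 𝔸) →L[ℝ] C(Icc a b, 𝔸) :=
  ContinuousLinearMap.compL ℝ _ _ _ (primitive hab) ∘L ContinuousLinearMap.mul ℝ C(Icc a b, 𝔸)

theorem volterra_apply (hab : a ≤ b) (r f : C(Icc a b, 𝔸)) :
    volterra hab r f = primitive hab (r * f) := rfl

theorem norm_volterra_apply_le (hab : a ≤ b) (r : C(Icc a b, 𝔸)) {f : C(Icc a b, 𝔸)} {A : ℝ}
    {n : ℕ} (hf : ∀ x, ‖f x‖ ≤ A * ((x - a) ^ n / n.factorial)) (x : Icc a b) :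
    ‖volterra hab r f x‖ ≤ ‖r‖ * A * ((x - a) ^ (n + 1) / (n + 1).factorial) := by
  refine norm_primitive_apply_le hab (fun y => (norm_mul_le (r y) (f y)).trans ?_) x
  rw [mul_assoc]
  gcongr
  exacts [r.norm_coe_le_norm y, hf y]

theorem norm_volterra_mul_pow_apply_le (hab : a ≤ b) (r s f : C(Icc a b, 𝔸)) (n : ℕ)
    (x : Icc a b) :
    ‖((volterra hab r * volterra hab s) ^ n) f x‖ ≤
      (‖r‖ * ‖s‖) ^ n * ‖f‖ * ((x - a) ^ (2 * n) / (2 * n).factorial) := by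
  induction n generalizing x with
  | zero => simpa using f.norm_coe_le_norm x
  | succ n ih =>
    rw [pow_succ']
    refine (norm_volterra_apply_le hab r (norm_volterra_apply_le hab s ih) x).trans_eq ?_
    rw [show 2 * (n + 1) = 2 * n + 1 + 1 by ring]
    ring

theorem norm_volterra_mul_pow_le (hab : a ≤ b) (r s : C(Icc a b, 𝔸)) (n : ℕ) :
    ‖(volterra hab r * volterra hab s) ^ n‖ ≤
      (‖r‖ * ‖s‖ * (b - a) ^ 2) ^ n / n.factorial := by
  refine ContinuousLinearMap.opNorm_le_bound _ (by positivity) fun f => ?_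
  rw [ContinuousMap.norm_le _ (by positivity)]
  intro x
  have hxa : (0 : ℝ) ≤ x - a := sub_nonneg.2 x.2.1
  calc ‖((volterra hab r * volterra hab s) ^ n) f x‖
      ≤ (‖r‖ * ‖s‖) ^ n * ‖f‖ * ((x - a) ^ (2 * n) / (2 * n).factorial) :=
        norm_volterra_mul_pow_apply_le hab r s f n x
    _ ≤ (‖r‖ * ‖s‖) ^ n * ‖f‖ * ((b - a) ^ (2 * n) / n.factorial) := by
        gcongr
        · exact x.2.2
        · omega
    _ = (‖r‖ * ‖s‖ * (b - a) ^ 2) ^ n / n.factorial * ‖f‖ := by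
        rw [mul_pow _ ((b - a) ^ 2), ← pow_mul]
        ring

theorem isUnit_one_sub_volterra_mul [CompleteSpace 𝔸] (hab : a ≤ b) (r s : C(Icc a b, 𝔸)) :
    IsUnit (1 - volterra hab r * volterra hab s) := by
  obtain ⟨n, hn⟩ := ((FloorSemiring.tendsto_pow_div_factorial_atTop
    (‖r‖ * ‖s‖ * (b - a) ^ 2)).eventually_lt_const one_pos).exists
  exact isUnit_one_sub_of_isUnit_one_sub_pow
    (isUnit_one_sub_of_norm_lt_one (R := C(Icc a b, 𝔸) →L[ℝ] C(Icc a b, 𝔸))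
      ((norm_volterra_mul_pow_le hab r s n).trans_lt hn))

/-- The first component `z` of the solution of the initial value problem `z' = r y`, `y' = s z`,
`z(a) = 0`, `y(a) = 1`, obtained by solving `z = ∫ₐ r + ∫ₐ r ∫ₐ s z`. -/
noncomputable def ivpSol (hab : a ≤ b) (r s : C(Icc a b, 𝔸)) : C(Icc a b, 𝔸) :=
  Ring.inverse (1 - volterra hab r * volterra hab s) (volterra hab r 1)

theorem eq_ivpSol_of_hasDerivAt [CompleteSpace 𝔸] (hab : a ≤ b) {r s : C(Icc a b, 𝔸)}
    {z y : ℝ → 𝔸} (hz : ContinuousOn z (Icc a b)) (hy : ContinuousOn y (Icc a b))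
    (hz' : ∀ t (ht : t ∈ Ioo a b), HasDerivAt z (r ⟨t, Ioo_subset_Icc_self ht⟩ * y t) t)
    (hy' : ∀ t (ht : t ∈ Ioo a b), HasDerivAt y (s ⟨t, Ioo_subset_Icc_self ht⟩ * z t) t)
    (hza : z a = 0) (hya : y a = 1) :
    ivpSol hab r s = ⟨(Icc a b).domRestrict z, hz.domRestrict⟩ ∧
    1 + volterra hab s (ivpSol hab r s) = ⟨(Icc a b).domRestrict y, hy.domRestrict⟩ := by
  set Z : C(Icc a b, 𝔸) := ⟨(Icc a b).domRestrict z, hz.domRestrict⟩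
  set Y : C(Icc a b, 𝔸) := ⟨(Icc a b).domRestrict y, hy.domRestrict⟩
  have hY : 1 + volterra hab s Z = Y := by
    ext x
    have := primitive_eq_sub_of_hasDerivAt hab (f := s * Z) hy hy' x
    simp [volterra_apply, this, hya, Y, Set.domRestrict]
  have hZ : volterra hab r Y = Z := by
    ext x
    have := primitive_eq_sub_of_hasDerivAt hab (f := r * Y) hz hz' x
    simp [volterra_apply, this, hza, Z, Set.domRestrict]
  have hfix : (1 - volterra hab r * volterra hab s) Z = volterra hab r 1 := by
    rw [sub_apply, one_apply_eq_self, sub_eq_iff_eq_add,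
      mul_apply_eq_comp, ← map_add, hY, hZ]
  have hsol : ivpSol hab r s = Z := by
    rw [ivpSol, ← hfix, ← mul_apply_eq_comp,
      Ring.inverse_mul_cancel _ (isUnit_one_sub_volterra_mul hab r s),
      one_apply_eq_self]
  exact ⟨hsol, by rw [hsol, hY]⟩

theorem contDiff_ivpSol [CompleteSpace 𝔸] (hab : a ≤ b) {n : ℕ∞ω} :
    ContDiff ℝ n fun q : C(Icc a b, 𝔸) × C(Icc a b, 𝔸) => ivpSol hab q.1 q.2 := by
  have hr : ContDiff ℝ n fun q : C(Icc a b, 𝔸) × C(Icc a b, 𝔸) => volterra hab q.1 := by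
    fun_prop
  have hs : ContDiff ℝ n fun q : C(Icc a b, 𝔸) × C(Icc a b, 𝔸) => volterra hab q.2 := by
    fun_prop
  have hinv : ContDiff ℝ n fun q : C(Icc a b, 𝔸) × C(Icc a b, 𝔸) =>
      Ring.inverse (1 - volterra hab q.1 * volterra hab q.2) :=
    contDiff_iff_contDiffAt.2 fun q =>
      (contDiffAt_ringInverse_of_isUnit (isUnit_one_sub_volterra_mul hab q.1 q.2)).comp q
        (contDiff_const.sub (hr.clm_comp hs)).contDiffAt
  exact hinv.clm_apply (hr.clm_apply contDiff_const)

end Volterra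

section FluxRatio

variable {a b : ℝ}

/-- The ratio `y(b) / z(b)` for the solution of `z' = r y`, `y' = s z`, `z(a) = 0`, `y(a) = 1`.
For `z' = y / ρ` and `y' = q z` it is `ρ(b) z'(b) / z(b)`. -/
noncomputable def fluxRatio (hab : a ≤ b) (r s : C(Icc a b, ℝ)) : ℝ :=
  (1 + volterra hab s (ivpSol hab r s)) ⟨b, right_mem_Icc.2 hab⟩ /
    ivpSol hab r s ⟨b, right_mem_Icc.2 hab⟩

theorem contDiffAt_fluxRatio (hab : a ≤ b) {n : ℕ∞ω} {r s : C(Icc a b, ℝ)}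
    (h : ivpSol hab r s ⟨b, right_mem_Icc.2 hab⟩ ≠ 0) :
    ContDiffAt ℝ n (fun q : C(Icc a b, ℝ) × C(Icc a b, ℝ) => fluxRatio hab q.1 q.2) (r, s) := by
  have heval : ContDiff ℝ n fun f : C(Icc a b, ℝ) => f ⟨b, right_mem_Icc.2 hab⟩ := by
    change ContDiff ℝ n (ContinuousMap.evalCLM ℝ (⟨b, right_mem_Icc.2 hab⟩ : Icc a b))
    exact ContinuousLinearMap.contDiff _
  have hz := contDiff_ivpSol (𝔸 := ℝ) hab (n := n)
  have hy : ContDiff ℝ n fun q : C(Icc a b, ℝ) × C(Icc a b, ℝ) =>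
      1 + volterra hab q.2 (ivpSol hab q.1 q.2) :=
    contDiff_const.add (ContDiff.clm_apply (by fun_prop) hz)
  exact (heval.comp hy).contDiffAt.div (heval.comp hz).contDiffAt h

theorem fluxRatio_zero_right (hab : a ≤ b) (r : C(Icc a b, ℝ)) :
    fluxRatio hab r 0 = (∫ t in a..b, IccExtend hab r t)⁻¹ := by
  simp [fluxRatio, ivpSol, volterra_apply, primitive_apply]

end FluxRatio

namespace SturmLiouville

variable {a b : ℝ} {ρ q : ℝ → ℝ}

/-- Admissible coefficients of the equation `(ρ z')' = q z` on `[a, b]`. -/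
structure IsCoeff (a b : ℝ) (ρ q : ℝ → ℝ) : Prop where
  continuousOn_leading : ContinuousOn ρ (Icc a b)
  continuousOn_potential : ContinuousOn q (Icc a b)
  pos : ∀ p ∈ Icc a b, 0 < ρ p
  nonneg : ∀ p ∈ Icc a b, 0 ≤ q p

/-- `w` is a `C¹` function on `[a, b]` with derivative `w'`, vanishing at `a`: a competitor in the
variational problem. -/
structure IsAdmissible (a b : ℝ) (w w' : ℝ → ℝ) : Prop where
  hasDerivWithinAt : ∀ p ∈ Icc a b, HasDerivWithinAt w (w' p) (Icc a b) p
  continuousOn_deriv : ContinuousOn w' (Icc a b)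
  apply_left : w a = 0

/-- `z` is a nontrivial solution of `(ρ z')' = q z` on `[a, b]` with `z(a) = 0`. Its derivative `z'`
is carried along since `ρ z'`, but not `ρ` or `z'`, is required to be differentiable. -/
structure IsSolution (a b : ℝ) (ρ q z z' : ℝ → ℝ) : Prop extends IsAdmissible a b z z' where
  deriv_left_ne_zero : z' a ≠ 0
  hasDerivAt_flux : ∀ p ∈ Ioo a b, HasDerivAt (fun s => ρ s * z' s) (q p * z p) p

/-- The energy `∫ₐᵇ (ρ w'² + q w²)`, whose Euler-Lagrange equation is `(ρ z')' = q z`. -/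
noncomputable def energy (a b : ℝ) (ρ q w w' : ℝ → ℝ) : ℝ :=
  ∫ p in a..b, (ρ p * w' p ^ 2 + q p * w p ^ 2)

theorem IsCoeff.const_mul (h : IsCoeff a b ρ q) {c : ℝ} (hc : 0 ≤ c) :
    IsCoeff a b ρ fun p => c * q p where
  continuousOn_leading := h.continuousOn_leading
  continuousOn_potential := continuousOn_const.mul h.continuousOn_potential
  pos := h.pos
  nonneg p hp := mul_nonneg hc (h.nonneg p hp)

section Admissible

variable {w w' : ℝ → ℝ}

theorem IsAdmissible.continuousOn (hw : IsAdmissible a b w w') : ContinuousOn w (Icc a b) :=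
  fun p hp => (hw.hasDerivWithinAt p hp).continuousWithinAt

theorem IsAdmissible.hasDerivAt (hw : IsAdmissible a b w w') {p : ℝ} (hp : p ∈ Ioo a b) :
    HasDerivAt w (w' p) p :=
  (hw.hasDerivWithinAt p (Ioo_subset_Icc_self hp)).hasDerivAt (Icc_mem_nhds hp.1 hp.2)

theorem IsAdmissible.const_mul (hw : IsAdmissible a b w w') (c : ℝ) :
    IsAdmissible a b (fun p => c * w p) fun p => c * w' p where
  hasDerivWithinAt p hp := (hw.hasDerivWithinAt p hp).const_mul c
  continuousOn_deriv := continuousOn_const.mul hw.continuousOn_deriv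
  apply_left := by rw [hw.apply_left, mul_zero]

theorem energy_const_mul (c : ℝ) (w w' : ℝ → ℝ) :
    energy a b ρ q (fun p => c * w p) (fun p => c * w' p) = c ^ 2 * energy a b ρ q w w' := by
  simp only [energy, ← intervalIntegral.integral_const_mul]
  congr! 2
  ring

theorem IsCoeff.energy_nonneg (h : IsCoeff a b ρ q) (hab : a ≤ b) (w w' : ℝ → ℝ) :
    0 ≤ energy a b ρ q w w' :=
  intervalIntegral.integral_nonneg hab fun p hp =>
    add_nonneg (mul_nonneg (h.pos p hp).le (sq_nonneg _)) (mul_nonneg (h.nonneg p hp) (sq_nonneg _))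

theorem IsCoeff.continuousOn_energyDensity (h : IsCoeff a b ρ q) (hw : IsAdmissible a b w w') :
    ContinuousOn (fun p => ρ p * w' p ^ 2 + q p * w p ^ 2) (Icc a b) :=
  (h.continuousOn_leading.mul (hw.continuousOn_deriv.pow 2)).add
    (h.continuousOn_potential.mul (hw.continuousOn.pow 2))

theorem IsCoeff.energy_lt_energy {ρ₂ q₂ : ℝ → ℝ} (h : IsCoeff a b ρ q) (h₂ : IsCoeff a b ρ₂ q₂)
    (hab : a < b) (hw : IsAdmissible a b w w') (hw' : w' a ≠ 0)
    (hρ : ∀ p ∈ Icc a b, ρ p < ρ₂ p) (hq : ∀ p ∈ Icc a b, q p ≤ q₂ p) :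
    energy a b ρ q w w' < energy a b ρ₂ q₂ w w' := by
  refine intervalIntegral.integral_lt_integral_of_continuousOn_of_le_of_exists_lt hab
    (h.continuousOn_energyDensity hw) (h₂.continuousOn_energyDensity hw) (fun p hp => ?_)
    ⟨a, left_mem_Icc.2 hab.le, ?_⟩
  · have hp' := Ioc_subset_Icc_self hp
    have := (hρ p hp').le
    have := hq p hp'
    gcongr
  · have := mul_lt_mul_of_pos_right (hρ a (left_mem_Icc.2 hab.le)) (pow_pos (abs_pos.2 hw') 2)
    simpa [hw.apply_left] using this

theorem IsCoeff.energy_const_mul_potential {β : ℝ → ℝ} (h : IsCoeff a b ρ β) (hab : a ≤ b)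
    (hw : IsAdmissible a b w w') (μ : ℝ) :
    energy a b ρ (fun p => μ * β p) w w' =
      (∫ p in a..b, ρ p * w' p ^ 2) + μ * ∫ p in a..b, β p * w p ^ 2 := by
  have hkin : ContinuousOn (fun p => ρ p * w' p ^ 2) (Icc a b) :=
    h.continuousOn_leading.mul (hw.continuousOn_deriv.pow 2)
  have hpot : ContinuousOn (fun p => μ * (β p * w p ^ 2)) (Icc a b) :=
    continuousOn_const.mul (h.continuousOn_potential.mul (hw.continuousOn.pow 2))
  rw [← intervalIntegral.integral_const_mul, ← intervalIntegral.integral_add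
    (hkin.intervalIntegrable_of_Icc hab) (hpot.intervalIntegrable_of_Icc hab)]
  simp only [energy, mul_assoc]

theorem tendsto_integral_mul_pow_div_atTop (hab : a < b) {β : ℝ → ℝ}
    (hβ : ContinuousOn β (Icc a b)) :
    Tendsto (fun n : ℕ => ∫ p in a..b, β p * ((p - a) / (b - a)) ^ n) atTop (𝓝 0) := by
  have hba : 0 < b - a := sub_pos.2 hab
  rw [← intervalIntegral.integral_zero (a := a) (b := b) (E := ℝ) (μ := volume)]
  refine intervalIntegral.tendsto_integral_filter_of_dominated_convergence (fun p => ‖β p‖)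
    (.of_forall fun n => ?_) (.of_forall fun n => .of_forall fun p hp => ?_)
    (hβ.norm.intervalIntegrable_of_Icc hab.le) ?_
  · rw [uIoc_of_le hab.le]
    exact (ContinuousOn.mono (by fun_prop) Ioc_subset_Icc_self).aestronglyMeasurable
      measurableSet_Ioc
  · rw [uIoc_of_le hab.le] at hp
    have h0 : 0 ≤ (p - a) / (b - a) := div_nonneg (sub_nonneg.2 hp.1.le) hba.le
    have h1 : (p - a) / (b - a) ≤ 1 := (div_le_one hba).2 (sub_le_sub_right hp.2 a)
    rw [norm_mul, norm_pow, Real.norm_of_nonneg h0]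
    exact mul_le_of_le_one_right (norm_nonneg _) (pow_le_one₀ h0 h1)
  · filter_upwards [compl_mem_ae_iff.2 (measure_singleton b)] with p hpb hp
    rw [uIoc_of_le hab.le] at hp
    have h0 : 0 ≤ (p - a) / (b - a) := div_nonneg (sub_nonneg.2 hp.1.le) hba.le
    have h1 : (p - a) / (b - a) < 1 :=
      (div_lt_one hba).2 (sub_lt_sub_right (hp.2.lt_of_ne hpb) a)
    simpa using (tendsto_pow_atTop_nhds_zero_of_lt_one h0 h1).const_mul (β p)

theorem exists_isAdmissible_integral_lt (hab : a < b) {β : ℝ → ℝ} (hβ : ContinuousOn β (Icc a b))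
    {c : ℝ} (hc : 0 < c) :
    ∃ w w', IsAdmissible a b w w' ∧ w b = 1 ∧ ∫ p in a..b, β p * w p ^ 2 < c := by
  have hlim := (tendsto_integral_mul_pow_div_atTop hab hβ).comp
    (tendsto_atTop_mono (fun n => by omega : ∀ n, n ≤ (n + 1) * 2) tendsto_id)
  obtain ⟨n, hn⟩ := (hlim.eventually_lt_const hc).exists
  simp only [Function.comp_apply, pow_mul] at hn
  refine ⟨fun p => ((p - a) / (b - a)) ^ (n + 1), fun p => (n + 1 : ℕ) * ((p - a) / (b - a)) ^ n *
    (1 / (b - a)), ⟨fun p _ => ?_, by fun_prop, by simp⟩, ?_, hn⟩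
  · exact ((((hasDerivAt_id p).sub_const a).div_const (b - a)).fun_pow (n + 1)).hasDerivWithinAt
  · simp only [div_self (sub_pos.2 hab).ne', one_pow]

end Admissible

section Solution

variable {z z' w w' : ℝ → ℝ}

theorem IsSolution.integral_eq (h : IsCoeff a b ρ q) (hab : a ≤ b)
    (hz : IsSolution a b ρ q z z') (hw : IsAdmissible a b w w') :
    ∫ p in a..b, (ρ p * z' p * w' p + q p * z p * w p) = ρ b * z' b * w b := by
  have hρ := h.continuousOn_leading
  have hq := h.continuousOn_potential
  have hzc := hz.continuousOn
  have hzc' := hz.continuousOn_deriv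
  have hwc := hw.continuousOn
  have hwc' := hw.continuousOn_deriv
  rw [intervalIntegral.integral_eq_sub_of_hasDerivAt_of_le (f := fun p => ρ p * z' p * w p) hab
    (by fun_prop) (fun p hp => ?_) (ContinuousOn.intervalIntegrable_of_Icc hab (by fun_prop)),
    hw.apply_left, mul_zero, sub_zero]
  exact ((hz.hasDerivAt_flux p hp).mul (hw.hasDerivAt hp)).congr_deriv (by ring)

theorem IsSolution.energy_eq (h : IsCoeff a b ρ q) (hab : a ≤ b) (hz : IsSolution a b ρ q z z') :
    energy a b ρ q z z' = ρ b * z' b * z b := by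
  rw [← hz.integral_eq h hab hz.toIsAdmissible, energy]
  congr! 2
  ring

theorem IsSolution.energy_pos (h : IsCoeff a b ρ q) (hab : a < b) (hz : IsSolution a b ρ q z z') :
    0 < energy a b ρ q z z' := by
  refine intervalIntegral.integral_pos hab (h.continuousOn_energyDensity hz.toIsAdmissible)
    (fun p hp => ?_) ⟨a, left_mem_Icc.2 hab.le, ?_⟩
  · have hp' := Ioc_subset_Icc_self hp
    exact add_nonneg (mul_nonneg (h.pos p hp').le (sq_nonneg _))
      (mul_nonneg (h.nonneg p hp') (sq_nonneg _))
  · have hρa := h.pos a (left_mem_Icc.2 hab.le)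
    have hza := hz.deriv_left_ne_zero
    exact add_pos_of_pos_of_nonneg (mul_pos hρa (by positivity))
      (mul_nonneg (h.nonneg a (left_mem_Icc.2 hab.le)) (sq_nonneg _))

theorem IsSolution.apply_right_ne_zero (h : IsCoeff a b ρ q) (hab : a < b)
    (hz : IsSolution a b ρ q z z') : z b ≠ 0 := by
  intro hzb
  have := hz.energy_pos h hab
  rw [hz.energy_eq h hab.le, hzb, mul_zero] at this
  exact this.false

theorem IsSolution.energy_normalized (h : IsCoeff a b ρ q) (hab : a < b)
    (hz : IsSolution a b ρ q z z') :
    energy a b ρ q (fun p => (z b)⁻¹ * z p) (fun p => (z b)⁻¹ * z' p) = ρ b * z' b / z b := by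
  have hzb := hz.apply_right_ne_zero h hab
  rw [energy_const_mul, hz.energy_eq h hab.le]
  field_simp

theorem IsCoeff.energy_sub_const_mul (h : IsCoeff a b ρ q) (hab : a ≤ b)
    (hw : IsAdmissible a b w w') (hz : IsAdmissible a b z z') (c : ℝ) :
    energy a b ρ q (fun p => w p - c * z p) (fun p => w' p - c * z' p) =
      energy a b ρ q w w' - 2 * c * (∫ p in a..b, (ρ p * z' p * w' p + q p * z p * w p)) +
        c ^ 2 * energy a b ρ q z z' := by
  have hρ := h.continuousOn_leading
  have hq := h.continuousOn_potential
  have hzc := hz.continuousOn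
  have hzc' := hz.continuousOn_deriv
  have hwc := hw.continuousOn
  have hwc' := hw.continuousOn_deriv
  have hint {f : ℝ → ℝ} (hf : ContinuousOn f (Icc a b)) : IntervalIntegrable f volume a b :=
    hf.intervalIntegrable_of_Icc hab
  simp only [energy]
  rw [← intervalIntegral.integral_const_mul, ← intervalIntegral.integral_const_mul,
    ← intervalIntegral.integral_sub (hint (by fun_prop)) (hint (by fun_prop)),
    ← intervalIntegral.integral_add (hint (by fun_prop)) (hint (by fun_prop))]
  congr! 2
  ring

theorem IsSolution.div_le_energy (h : IsCoeff a b ρ q) (hab : a < b)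
    (hz : IsSolution a b ρ q z z') (hw : IsAdmissible a b w w') (hwb : w b = 1) :
    ρ b * z' b / z b ≤ energy a b ρ q w w' := by
  have hzb := hz.apply_right_ne_zero h hab
  have hexp := h.energy_sub_const_mul hab.le hw hz.toIsAdmissible (z b)⁻¹
  rw [hz.integral_eq h hab.le hw, hz.energy_eq h hab.le, hwb] at hexp
  have hdefect : energy a b ρ q (fun p => w p - (z b)⁻¹ * z p) (fun p => w' p - (z b)⁻¹ * z' p) =
      energy a b ρ q w w' - ρ b * z' b / z b := by
    rw [hexp]
    field_simp
    ring
  exact sub_nonneg.1 (hdefect ▸ h.energy_nonneg hab.le _ _)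

theorem IsSolution.div_lt_div {ρ₂ q₂ v v' : ℝ → ℝ} (h : IsCoeff a b ρ q)
    (h₂ : IsCoeff a b ρ₂ q₂) (hab : a < b) (hz : IsSolution a b ρ q z z')
    (hv : IsSolution a b ρ₂ q₂ v v') (hρ : ∀ p ∈ Icc a b, ρ p < ρ₂ p)
    (hq : ∀ p ∈ Icc a b, q p ≤ q₂ p) :
    ρ b * z' b / z b < ρ₂ b * v' b / v b := by
  have hvb := hv.apply_right_ne_zero h₂ hab
  have hw := hv.const_mul (v b)⁻¹
  calc ρ b * z' b / z b
      ≤ energy a b ρ q (fun p => (v b)⁻¹ * v p) (fun p => (v b)⁻¹ * v' p) :=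
        hz.div_le_energy h hab hw (inv_mul_cancel₀ hvb)
    _ < energy a b ρ₂ q₂ (fun p => (v b)⁻¹ * v p) (fun p => (v b)⁻¹ * v' p) :=
        h.energy_lt_energy h₂ hab hw (mul_ne_zero (inv_ne_zero hvb) hv.deriv_left_ne_zero) hρ hq
    _ = ρ₂ b * v' b / v b := hv.energy_normalized h₂ hab

end Solution

section SpectralParameter

variable {β : ℝ → ℝ} {z z' : ℝ → ℝ → ℝ}

theorem concaveOn_div (h : IsCoeff a b ρ β) (hab : a < b)
    (hz : ∀ μ, 0 ≤ μ → IsSolution a b ρ (fun p => μ * β p) (z μ) (z' μ)) :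
    ConcaveOn ℝ (Ici 0) fun μ => ρ b * z' μ b / z μ b := by
  refine ⟨convex_Ici 0, fun x hx y hy s t hs ht hst => ?_⟩
  set μ := s • x + t • y with hμdef
  have hμ : 0 ≤ μ := convex_Ici 0 hx hy hs ht hst
  have hzb := (hz μ hμ).apply_right_ne_zero (h.const_mul hμ) hab
  have hw := (hz μ hμ).const_mul (z μ b)⁻¹
  set kin := ∫ p in a..b, ρ p * ((z μ b)⁻¹ * z' μ p) ^ 2
  set pot := ∫ p in a..b, β p * ((z μ b)⁻¹ * z μ p) ^ 2
  have hle {ν : ℝ} (hν : 0 ≤ ν) : ρ b * z' ν b / z ν b ≤ kin + ν * pot :=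
    ((hz ν hν).div_le_energy (h.const_mul hν) hab hw (inv_mul_cancel₀ hzb)).trans_eq
      (h.energy_const_mul_potential hab.le hw ν)
  calc s • (ρ b * z' x b / z x b) + t • (ρ b * z' y b / z y b)
      ≤ s • (kin + x * pot) + t • (kin + y * pot) := by
        gcongr
        exacts [hle hx, hle hy]
    _ = kin + μ * pot := by
        simp only [hμdef, smul_eq_mul]
        linear_combination kin * hst
    _ = ρ b * z' μ b / z μ b := by
        rw [← (hz μ hμ).energy_normalized (h.const_mul hμ) hab,
          h.energy_const_mul_potential hab.le hw]

theorem isLittleO_div (h : IsCoeff a b ρ β) (hab : a < b)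
    (hz : ∀ μ, 0 ≤ μ → IsSolution a b ρ (fun p => μ * β p) (z μ) (z' μ)) :
    (fun μ => ρ b * z' μ b / z μ b) =o[atTop] id := by
  refine isLittleO_iff.2 fun c hc => ?_
  obtain ⟨w, w', hw, hwb, hwc⟩ :=
    exists_isAdmissible_integral_lt hab h.continuousOn_potential (half_pos hc)
  set kin := ∫ p in a..b, ρ p * w' p ^ 2
  filter_upwards [eventually_ge_atTop 0, eventually_ge_atTop (kin / (c / 2))] with μ hμ hμkin
  have hcoeff := h.const_mul hμ
  have hnonneg : 0 ≤ ρ b * z' μ b / z μ b :=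
    (hz μ hμ).energy_normalized hcoeff hab ▸ hcoeff.energy_nonneg hab.le _ _
  rw [Real.norm_of_nonneg hnonneg, id, Real.norm_of_nonneg hμ]
  calc ρ b * z' μ b / z μ b ≤ kin + μ * ∫ p in a..b, β p * w p ^ 2 :=
        ((hz μ hμ).div_le_energy hcoeff hab hw hwb).trans_eq
          (h.energy_const_mul_potential hab.le hw μ)
    _ ≤ μ * (c / 2) + μ * (c / 2) := by
        gcongr
        exact (div_le_iff₀ (half_pos hc)).1 hμkin
    _ = c * μ := by ring

theorem exists_div_le_add_mul (h : IsCoeff a b ρ β) (hab : a < b)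
    (hz : ∀ μ, 0 ≤ μ → IsSolution a b ρ (fun p => μ * β p) (z μ) (z' μ)) (g : ℝ) {σ : ℝ}
    (hσ : 0 < σ) : ∃ μ, 0 ≤ μ ∧ ρ b * z' μ b / z μ b ≤ g + σ * μ := by
  have hlittle := (isLittleO_div h hab hz).sub (isLittleO_const_id_atTop g)
  obtain ⟨μ, hμ, hle⟩ := ((eventually_ge_atTop 0).and (hlittle.bound hσ)).exists
  rw [id, Real.norm_of_nonneg hμ] at hle
  exact ⟨μ, hμ, by linarith [Real.le_norm_self (ρ b * z' μ b / z μ b - g)]⟩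

end SpectralParameter

section VolterraRepresentation

variable {z z' : ℝ → ℝ}

theorem IsSolution.exists_mul_eq_ivpSol (h : IsCoeff a b ρ q) (hab : a ≤ b)
    (hz : IsSolution a b ρ q z z') {r s : C(Icc a b, ℝ)} (hr : ∀ x : Icc a b, r x * ρ x = 1)
    (hs : ∀ x : Icc a b, s x = q x) :
    ∃ c ≠ 0, (∀ x : Icc a b, ivpSol hab r s x = c * z x) ∧
      ∀ x : Icc a b, (1 + volterra hab s (ivpSol hab r s)) x = c * (ρ x * z' x) := by
  have hza := hz.deriv_left_ne_zero
  have hρa := (h.pos a (left_mem_Icc.2 hab)).ne'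
  have hsol := eq_ivpSol_of_hasDerivAt hab (r := r) (s := s)
    (z := fun p => (ρ a * z' a)⁻¹ * z p) (y := fun p => (ρ a * z' a)⁻¹ * (ρ p * z' p))
    (continuousOn_const.mul hz.continuousOn)
    (continuousOn_const.mul (h.continuousOn_leading.mul hz.continuousOn_deriv))
    (fun p hp => ((hz.hasDerivAt hp).const_mul _).congr_deriv ?_)
    (fun p hp => ((hz.hasDerivAt_flux p hp).const_mul _).congr_deriv ?_)
    (by simp [hz.apply_left]) (inv_mul_cancel₀ (mul_ne_zero hρa hza))
  · exact ⟨(ρ a * z' a)⁻¹, inv_ne_zero (mul_ne_zero hρa hza),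
      DFunLike.congr_fun hsol.1, DFunLike.congr_fun hsol.2⟩
  · linear_combination -((ρ a * z' a)⁻¹ * z' p) * hr ⟨p, Ioo_subset_Icc_self hp⟩
  · rw [hs]
    ring

theorem IsSolution.ivpSol_apply_right_ne_zero (h : IsCoeff a b ρ q) (hab : a < b)
    (hz : IsSolution a b ρ q z z') {r s : C(Icc a b, ℝ)} (hr : ∀ x : Icc a b, r x * ρ x = 1)
    (hs : ∀ x : Icc a b, s x = q x) : ivpSol hab.le r s ⟨b, right_mem_Icc.2 hab.le⟩ ≠ 0 := by
  obtain ⟨c, hc, hcz, -⟩ := hz.exists_mul_eq_ivpSol h hab.le hr hs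
  rw [hcz]
  exact mul_ne_zero hc (hz.apply_right_ne_zero h hab)

theorem IsSolution.fluxRatio_eq (h : IsCoeff a b ρ q) (hab : a ≤ b)
    (hz : IsSolution a b ρ q z z') {r s : C(Icc a b, ℝ)} (hr : ∀ x : Icc a b, r x * ρ x = 1)
    (hs : ∀ x : Icc a b, s x = q x) : fluxRatio hab r s = ρ b * z' b / z b := by
  obtain ⟨c, hc, hcz, hcy⟩ := hz.exists_mul_eq_ivpSol h hab hr hs
  rw [fluxRatio, hcy, hcz, mul_div_mul_left _ _ hc]

theorem IsSolution.div_eq_inv_integral (h : IsCoeff a b ρ q) (hab : a ≤ b)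
    (hz : IsSolution a b ρ q z z') (hq : ∀ p ∈ Icc a b, q p = 0) :
    ρ b * z' b / z b = (∫ p in a..b, (ρ p)⁻¹)⁻¹ := by
  have hρ0 : ∀ p ∈ Icc a b, ρ p ≠ 0 := fun p hp => (h.pos p hp).ne'
  rw [← hz.fluxRatio_eq h hab (r := ⟨_, (h.continuousOn_leading.inv₀ hρ0).domRestrict⟩) (s := 0)
    (fun x => inv_mul_cancel₀ (hρ0 x x.2)) fun x => (hq x x.2).symm, fluxRatio_zero_right]
  congr 1
  refine intervalIntegral.integral_congr fun p hp => ?_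
  rw [uIcc_of_le hab] at hp
  exact IccExtend_of_mem hab _ hp

theorem contDiffAt_fluxRatio_ringInverse_smul (hab : a ≤ b) {n : ℕ∞ω} {R B : ℝ → C(Icc a b, ℝ)}
    {l μ : ℝ} (hR : ContDiffAt ℝ n R l) (hB : ContDiffAt ℝ n B l) (hRl : IsUnit (R l))
    (h : ivpSol hab (Ring.inverse (R l)) (μ • B l) ⟨b, right_mem_Icc.2 hab⟩ ≠ 0) :
    ContDiffAt ℝ n (fun x : ℝ × ℝ => fluxRatio hab (Ring.inverse (R x.1)) (x.2 • B x.1))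
      (l, μ) := by
  have hinv : ContDiffAt ℝ n (fun x : ℝ × ℝ => Ring.inverse (R x.1)) (l, μ) :=
    (contDiffAt_ringInverse_of_isUnit hRl).comp (l, μ) (hR.comp (l, μ) contDiffAt_fst)
  have hsmul : ContDiffAt ℝ n (fun x : ℝ × ℝ => x.2 • B x.1) (l, μ) :=
    contDiffAt_snd.smul (hB.comp (l, μ) contDiffAt_fst)
  exact (contDiffAt_fluxRatio hab h).comp (l, μ) (hinv.prodMk hsmul)

end VolterraRepresentation

section Family

variable {s : Set ℝ} {ρ β : ℝ → ℝ → ℝ} {z z' : ℝ → ℝ → ℝ → ℝ}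

theorem exists_contDiffAt_eq_div (hab : a < b) {n : ℕ∞ω} {R B : ℝ → C(Icc a b, ℝ)}
    (hRρ : ∀ l ∈ s, ∀ x : Icc a b, R l x = ρ l x) (hBβ : ∀ l ∈ s, ∀ x : Icc a b, B l x = β l x)
    (hR : ∀ l ∈ s, ContDiffAt ℝ n R l) (hB : ∀ l ∈ s, ContDiffAt ℝ n B l)
    (hcoeff : ∀ l ∈ s, IsCoeff a b (ρ l) (β l))
    (hz : ∀ l ∈ s, ∀ μ, 0 ≤ μ →
      IsSolution a b (ρ l) (fun p => μ * β l p) (z l μ) (z' l μ)) :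
    ∃ D : ℝ → ℝ → ℝ, ∀ l ∈ s, ∀ μ, 0 ≤ μ →
      ContDiffAt ℝ n (fun x : ℝ × ℝ => D x.1 x.2) (l, μ) ∧
        D l μ = ρ l b * z' l μ b / z l μ b := by
  refine ⟨fun l μ => fluxRatio hab.le (Ring.inverse (R l)) (μ • B l), fun l hl μ hμ => ?_⟩
  have hunit : IsUnit (R l) := (ContinuousMap.isUnit_iff_forall_ne_zero _).2 fun x =>
    (hRρ l hl x).symm ▸ ((hcoeff l hl).pos x x.2).ne'
  have hrec (x : Icc a b) : Ring.inverse (R l) x * ρ l x = 1 :=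
    hRρ l hl x ▸ DFunLike.congr_fun (Ring.inverse_mul_cancel _ hunit) x
  have hpot (x : Icc a b) : (μ • B l) x = μ * β l x := hBβ l hl x ▸ rfl
  have hμcoeff := (hcoeff l hl).const_mul hμ
  exact ⟨contDiffAt_fluxRatio_ringInverse_smul hab.le (hR l hl) (hB l hl) hunit
      ((hz l hl μ hμ).ivpSol_apply_right_ne_zero hμcoeff hab hrec hpot),
    (hz l hl μ hμ).fluxRatio_eq hμcoeff hab.le hrec hpot⟩

theorem strictMonoOn_div (hab : a < b) (hcoeff : ∀ l ∈ s, IsCoeff a b (ρ l) (β l))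
    (hρ : ∀ p ∈ Icc a b, StrictMonoOn (fun l => ρ l p) s)
    (hβ : ∀ p ∈ Icc a b, MonotoneOn (fun l => β l p) s) {μ : ℝ} (hμ : 0 ≤ μ)
    (hz : ∀ l ∈ s, IsSolution a b (ρ l) (fun p => μ * β l p) (z l μ) (z' l μ)) :
    StrictMonoOn (fun l => ρ l b * z' l μ b / z l μ b) s := fun l hl k hk hlk =>
  (hz l hl).div_lt_div ((hcoeff l hl).const_mul hμ) ((hcoeff k hk).const_mul hμ) hab (hz k hk)
    (fun p hp => hρ p hp hl hk hlk)
    fun p hp => mul_le_mul_of_nonneg_left (hβ p hp hl hk hlk.le) hμ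

theorem exists_contDiffAt_dispersion_curve (hab : a < b) {n : ℕ∞ω} (hn : n ≠ 0)
    {g σ lam₀ : ℝ} (hσ : 0 < σ) {R B : ℝ → C(Icc a b, ℝ)}
    (hRρ : ∀ l ∈ Ioi lam₀, ∀ x : Icc a b, R l x = ρ l x)
    (hBβ : ∀ l ∈ Ioi lam₀, ∀ x : Icc a b, B l x = β l x)
    (hR : ∀ l ∈ Ioi lam₀, ContDiffAt ℝ n R l) (hB : ∀ l ∈ Ioi lam₀, ContDiffAt ℝ n B l)
    (hcoeff : ∀ l ∈ Ici lam₀, IsCoeff a b (ρ l) (β l))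
    (hρ : ∀ p ∈ Icc a b, StrictMonoOn (fun l => ρ l p) (Ici lam₀))
    (hβ : ∀ p ∈ Icc a b, MonotoneOn (fun l => β l p) (Ici lam₀))
    (hg : g * ∫ p in a..b, (ρ lam₀ p)⁻¹ = 1)
    (hz : ∀ l ∈ Ici lam₀, ∀ μ, 0 ≤ μ →
      IsSolution a b (ρ l) (fun p => μ * β l p) (z l μ) (z' l μ)) :
    ∃ m : ℝ → ℝ, (∀ l ∈ Ioi lam₀, ContDiffAt ℝ n m l) ∧ StrictMonoOn m (Ioi lam₀) ∧
      (∀ l ∈ Ioi lam₀, 0 < m l) ∧ ∀ l ∈ Ioi lam₀, ∀ μ, 0 ≤ μ →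
        (ρ l b * z' l μ b - (g + σ * μ) * z l μ b = 0 ↔ μ = m l) := by
  have hsub : Ioi lam₀ ⊆ Ici lam₀ := Ioi_subset_Ici_self
  have hratio_mono (μ : ℝ) (hμ : 0 ≤ μ) := strictMonoOn_div hab hcoeff hρ hβ hμ
    fun l hl => hz l hl μ hμ
  have hratio₀ : ρ lam₀ b * z' lam₀ 0 b / z lam₀ 0 b = g := by
    rw [(hz lam₀ self_mem_Ici 0 le_rfl).div_eq_inv_integral
      ((hcoeff lam₀ self_mem_Ici).const_mul le_rfl) hab.le fun p _ => zero_mul _]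
    exact (eq_inv_of_mul_eq_one_left hg).symm
  obtain ⟨D, hD⟩ := exists_contDiffAt_eq_div hab hRρ hBβ hR hB (fun l hl => hcoeff l (hsub hl))
    fun l hl => hz l (hsub hl)
  have hconc : ∀ l ∈ Ioi lam₀, ConcaveOn ℝ (Ici 0) fun μ => D l μ - (g + σ * μ) := fun l hl =>
    ((concaveOn_div (hcoeff l (hsub hl)) hab (hz l (hsub hl))).sub
      ((convexOn_const g (convex_Ici 0)).add ((convexOn_id (convex_Ici 0)).smul hσ.le))).congr
        fun μ hμ => by simp [(hD l hl μ hμ).2]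
  have hmono : ∀ μ, 0 ≤ μ → StrictMonoOn (fun l => D l μ - (g + σ * μ)) (Ioi lam₀) := by
    intro μ hμ l hl k hk hlk
    simp only [(hD l hl μ hμ).2, (hD k hk μ hμ).2]
    exact sub_lt_sub_right (hratio_mono μ hμ (hsub hl) (hsub hk) hlk) _
  have hpos : ∀ l ∈ Ioi lam₀, 0 < D l 0 - (g + σ * 0) := fun l hl => by
    simpa [(hD l hl 0 le_rfl).2, hratio₀] using hratio_mono 0 le_rfl self_mem_Ici (hsub hl) hl
  have hneg : ∀ l ∈ Ioi lam₀, ∃ μ, 0 ≤ μ ∧ D l μ - (g + σ * μ) ≤ 0 := fun l hl => by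
    obtain ⟨μ, hμ, hle⟩ := exists_div_le_add_mul (hcoeff l (hsub hl)) hab (hz l (hsub hl)) g hσ
    exact ⟨μ, hμ, sub_nonpos.2 ((hD l hl μ hμ).2.trans_le hle)⟩
  obtain ⟨m, hm, hm_mono, hm_pos, hroot⟩ :=
    exists_strictMonoOn_contDiffAt_zero_of_concaveOn isOpen_Ioi hn
      (fun l hl μ hμ => (hD l hl μ hμ).1.sub (by fun_prop)) hconc hmono hpos hneg
  refine ⟨m, hm, hm_mono, hm_pos, fun l hl μ hμ => ?_⟩
  rw [← hroot l hl μ hμ, (hD l hl μ hμ).2, sub_eq_zero, sub_eq_zero, div_eq_iff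
    ((hz l (hsub hl) μ hμ).apply_right_ne_zero ((hcoeff l (hsub hl)).const_mul hμ) hab)]

end Family

end SturmLiouville

open SturmLiouville

theorem isCoeff_sqrt {a b : ℝ} {Γ : ℝ → ℝ} (hΓ : ContinuousOn Γ (Icc a b)) {l : ℝ}
    (hl : ∀ p ∈ Icc a b, 2 * Γ p < l) :
    IsCoeff a b (fun p => √(l - 2 * Γ p) ^ 3) fun p => √(l - 2 * Γ p) where
  continuousOn_leading := by fun_prop
  continuousOn_potential := by fun_prop
  pos p hp := pow_pos (Real.sqrt_pos.2 (sub_pos.2 (hl p hp))) 3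
  nonneg p _ := Real.sqrt_nonneg _

theorem stmt_13_general {a b g σ lam₀ : ℝ} (hab : a < b) (hσ : 0 < σ) {Γ : ℝ → ℝ}
    (hΓ : ContinuousOn Γ (Icc a b)) (hlam₀ : 2 * sSup (Γ '' Icc a b) < lam₀)
    (hg : g * ∫ p in a..b, (√(lam₀ - 2 * Γ p) ^ 3)⁻¹ = 1) {z z' : ℝ → ℝ → ℝ → ℝ}
    (hz : ∀ lam ∈ Ici lam₀, ∀ μ, 0 ≤ μ → IsSolution a b (fun p => √(lam - 2 * Γ p) ^ 3)
      (fun p => μ * √(lam - 2 * Γ p)) (z lam μ) (z' lam μ)) :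
    ∃ m : ℝ → ℝ, ContinuousOn m (Ioi lam₀) ∧ StrictMonoOn m (Ioi lam₀) ∧
      AnalyticOnNhd ℝ m (Ioi lam₀) ∧ (∀ lam ∈ Ioi lam₀, 0 < m lam) ∧
      ∀ lam ∈ Ioi lam₀, ∀ μ, 0 ≤ μ →
        (√(lam - 2 * Γ b) ^ 3 * z' lam μ b - (g + σ * μ) * z lam μ b = 0 ↔ μ = m lam) := by
  have hΓlam {lam p : ℝ} (hlam : lam ∈ Ici lam₀) (hp : p ∈ Icc a b) : 2 * Γ p < lam := by
    have := le_csSup (isCompact_Icc.image_of_continuousOn hΓ).bddAbove (mem_image_of_mem Γ hp)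
    linarith [mem_Ici.1 hlam]
  let G : C(Icc a b, ℝ) := ⟨_, hΓ.domRestrict⟩
  have hconst : ContDiff ℝ ω (ContinuousMap.const (Icc a b) : ℝ → C(Icc a b, ℝ)) :=
    (ContinuousLinearMap.const ℝ (Icc a b) : ℝ →L[ℝ] C(Icc a b, ℝ)).contDiff
  have hB : ∀ lam ∈ Ioi lam₀,
      ContDiffAt ℝ ω (fun l : ℝ => sqrtComp (ContinuousMap.const _ l - 2 * G)) lam := by
    intro lam hlam
    refine (contDiffAt_sqrtComp fun x => ?_).comp lam (hconst.contDiffAt.sub contDiffAt_const)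
    exact sub_pos.2 (hΓlam (Ioi_subset_Ici_self hlam) x.2)
  have hsqrt_mono : ∀ p ∈ Icc a b, StrictMonoOn (fun l => √(l - 2 * Γ p)) (Ici lam₀) :=
    fun p hp l hl k _ hlk => Real.sqrt_lt_sqrt (sub_pos.2 (hΓlam hl hp)).le (sub_lt_sub_right hlk _)
  obtain ⟨m, hm, hm_mono, hm_pos, hroot⟩ := exists_contDiffAt_dispersion_curve hab
    (n := ω) (by simp) hσ (fun _ _ _ => rfl) (fun _ _ _ => rfl) (fun l hl => (hB l hl).pow 3) hB
    (fun l hl => isCoeff_sqrt hΓ fun p hp => hΓlam hl hp)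
    (fun p hp l hl k hk hlk => pow_lt_pow_left₀ (hsqrt_mono p hp hl hk hlk) (Real.sqrt_nonneg _)
      three_ne_zero) (fun p hp => (hsqrt_mono p hp).monotoneOn) hg hz
  exact ⟨m, fun l hl => (hm l hl).continuousAt.continuousWithinAt, hm_mono,
    fun l hl => (hm l hl).analyticAt, hm_pos, hroot⟩

/-- There is a continuous, strictly increasing, real-analytic function
`m : (λ₀,∞) → (0,∞)` such that for all `λ > λ₀` and `μ ≥ 0` one has `Ξ(λ,μ) = 0 ↔ μ = m(λ)`,
where `Ξ(λ,μ) := λ^{3/2} z′(0;λ,μ) − (g+σμ) z(0;λ,μ)` and `z(·;λ,μ)` solves the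
Sturm–Liouville initial value problem with `b(p;λ) = √(λ − 2Γ(p))`. -/
theorem stmt_13 (p₀ g σ lam₀ : ℝ) (hp₀ : p₀ < 0) (hg : 0 < g) (hσ : 0 < σ)
    (Γ : ℝ → ℝ) (K : NNReal) (hΓ : LipschitzOnWith K Γ (Set.Icc p₀ 0)) (hΓ0 : Γ 0 = 0)
    (hlam₀ : 2 * sSup (Γ '' Set.Icc p₀ 0) < lam₀)
    (hlam₀' : g * ∫ p in p₀..0, (Real.sqrt (lam₀ - 2 * Γ p) ^ 3)⁻¹ = 1)
    (z z' : ℝ → ℝ → ℝ → ℝ)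
    (hz : ∀ lam : ℝ, 2 * sSup (Γ '' Set.Icc p₀ 0) < lam → ∀ μ : ℝ, 0 ≤ μ →
      ∀ p ∈ Set.Icc p₀ 0, HasDerivWithinAt (z lam μ) (z' lam μ p) (Set.Icc p₀ 0) p)
    (hzc : ∀ lam : ℝ, 2 * sSup (Γ '' Set.Icc p₀ 0) < lam → ∀ μ : ℝ, 0 ≤ μ →
      ContinuousOn (z' lam μ) (Set.Icc p₀ 0))
    (hz0 : ∀ lam : ℝ, 2 * sSup (Γ '' Set.Icc p₀ 0) < lam → ∀ μ : ℝ, 0 ≤ μ →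
      z lam μ p₀ = 0)
    (hz1 : ∀ lam : ℝ, 2 * sSup (Γ '' Set.Icc p₀ 0) < lam → ∀ μ : ℝ, 0 ≤ μ →
      z' lam μ p₀ = 1)
    (hzode : ∀ lam : ℝ, 2 * sSup (Γ '' Set.Icc p₀ 0) < lam → ∀ μ : ℝ, 0 ≤ μ →
      ∀ p ∈ Set.Ioo p₀ 0,
        HasDerivAt (fun s => Real.sqrt (lam - 2 * Γ s) ^ 3 * z' lam μ s)
          (μ * Real.sqrt (lam - 2 * Γ p) * z lam μ p) p) :
    ∃ m : ℝ → ℝ,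
      ContinuousOn m (Set.Ioi lam₀) ∧
      StrictMonoOn m (Set.Ioi lam₀) ∧
      AnalyticOnNhd ℝ m (Set.Ioi lam₀) ∧
      (∀ lam ∈ Set.Ioi lam₀, 0 < m lam) ∧
      (∀ lam ∈ Set.Ioi lam₀, ∀ μ : ℝ, 0 ≤ μ →
        (Real.sqrt lam ^ 3 * z' lam μ 0 - (g + σ * μ) * z lam μ 0 = 0 ↔ μ = m lam)) := by
  simpa only [hΓ0, mul_zero, sub_zero] using stmt_13_general hp₀ hσ hΓ.continuousOn hlam₀ hlam₀'
    fun lam hlam μ hμ =>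
      have h : 2 * sSup (Γ '' Icc p₀ 0) < lam := hlam₀.trans_le hlam
      ⟨⟨hz lam h μ hμ, hzc lam h μ hμ, hz0 lam h μ hμ⟩, (hz1 lam h μ hμ).trans_ne one_ne_zero,
        hzode lam h μ hμ⟩
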